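/- arXiv:1901.00082 — 3 statements merged into one kernel-verified Lean document; each statement's English description precedes it below -/
import Mathlib

section
/- Let Ω be a nonempty set and let S ⊆ FIN(Ω) be closed under binary union, with (S,∪) of infinite breadth. Then for every a ∈ FIN(Ω) and every n ≥ 2 there exist b₁, …, b_n ∈ S and distinct γ₁, …, γ_n ∈ Ω ∖ a such that γ_j ∈ b_j ∖ b_k whenever j ≠ k. -/
/-!
In an incompressible family `E` with at least two members, each `e ∈ E` has a private point:
otherwise `E \ {e}` would already have the same union as `E`. Private points of different members
are different, so at most `|a|` of them lie in a finite set `a`. Starting from an incompressible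
family of size at least `n + |a|`, at least `n` members remain whose private points avoid `a`, and
any `n` of these give the required `b` and `γ`.
-/

/-- A finite nonempty union-closed family `E ⊆ FIN(Ω)` is incompressible if no
    proper nonempty subfamily has the same union ("product") as `E`. -/
def IncompU {Ω : Type*} [DecidableEq Ω] (E : Finset (Finset Ω)) : Prop :=
  E.Nonempty ∧ ∀ E' : Finset (Finset Ω), E' ⊂ E → E'.Nonempty →
    E'.sup id ≠ E.sup id

/-- `S ⊆ FIN(Ω)` has infinite breadth: it contains incompressible subsets of
    every finite size. -/
def InfBreadthIn {Ω : Type*} [DecidableEq Ω] (S : Set (Finset Ω)) : Prop :=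
  ∀ n : ℕ, ∃ E : Finset (Finset Ω), ↑E ⊆ S ∧ IncompU E ∧ n ≤ E.card

/-- Every member of an incompressible family with at least two members has a private point. -/
theorem IncompU.exists_private {Ω : Type*} [DecidableEq Ω] {E : Finset (Finset Ω)}
    (hE : IncompU E) (h2 : 2 ≤ E.card) {e : Finset Ω} (he : e ∈ E) :
    ∃ x ∈ e, ∀ f ∈ E, f ≠ e → x ∉ f := by
  by_contra! h
  have hne : (E.erase e).Nonempty := by
    rw [← Finset.card_pos, Finset.card_erase_of_mem he]
    omega
  refine hE.2 _ (Finset.erase_ssubset he) hne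
    (le_antisymm (Finset.sup_mono (Finset.erase_subset e E)) (Finset.sup_le fun f hf => ?_))
  by_cases hfe : f = e
  · subst hfe
    intro x hx
    obtain ⟨g, hg, hgf, hxg⟩ := h x hx
    exact Finset.le_sup (f := id) (Finset.mem_erase.2 ⟨hgf, hg⟩) hxg
  · exact Finset.le_sup (f := id) (Finset.mem_erase.2 ⟨hfe, hf⟩)

/-- If `S ⊆ FIN(Ω)` is union-closed of infinite breadth, then for
    every `a ∈ FIN(Ω)` and every `n ≥ 2` there are `b₁,…,b_n ∈ S` and distinct
    `γ₁,…,γ_n ∈ Ω \ a` with `γ_j ∈ b_j \ b_k` whenever `j ≠ k`. -/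
theorem stmt16 {Ω : Type*} [DecidableEq Ω] [Nonempty Ω] (S : Set (Finset Ω))
    (hS : ∀ x ∈ S, ∀ y ∈ S, x ∪ y ∈ S) (hbr : InfBreadthIn S) :
    ∀ a : Finset Ω, ∀ n : ℕ, 2 ≤ n →
      ∃ (b : Fin n → Finset Ω) (γ : Fin n → Ω),
        (∀ j, b j ∈ S) ∧ Function.Injective γ ∧ (∀ j, γ j ∉ a) ∧
        ∀ j k, j ≠ k → γ j ∈ b j ∧ γ j ∉ b k := by
  intro a n hn
  obtain ⟨E, hES, hE, hcard⟩ := hbr (n + a.card)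
  have hpriv := fun e : E => hE.exists_private (by omega) e.2
  choose g hg hg' using hpriv
  have hinj : Function.Injective g := by
    intro e f hef
    by_contra hne
    exact hg' e f f.2 (fun h => hne (Subtype.ext h.symm)) (hef ▸ hg f)
  let T : Finset E := Finset.univ.filter fun e => g e ∉ a
  -- By injectivity of `g`, at most `|a|` members have their private point in `a`.
  have hbad : (Finset.univ.filter fun e : E => g e ∈ a).card ≤ a.card :=
    Finset.card_le_card_of_injOn g (fun e he => (Finset.mem_filter.1 he).2) hinj.injOn
  have hsum := Finset.card_filter_add_card_filter_not
    (s := (Finset.univ : Finset E)) (fun e => g e ∈ a)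
  have hT : n ≤ T.card := by
    rw [Finset.card_univ, Fintype.card_coe] at hsum
    change n ≤ (Finset.univ.filter fun e : E => g e ∉ a).card
    omega
  let i : Fin n → E := fun j => (T.equivFin.symm (Fin.castLE hT j)).1
  have hi : Function.Injective i := fun j k h =>
    Fin.castLE_injective hT (T.equivFin.symm.injective (Subtype.ext h))
  refine ⟨fun j => (i j).1, fun j => g (i j), fun j => hES (i j).2, hinj.comp hi,
    fun j => (Finset.mem_filter.1 (T.equivFin.symm (Fin.castLE hT j)).2).2, fun j k hjk =>
    ⟨hg _, hg' _ _ (i k).2 fun h => hjk (hi (Subtype.ext h.symm))⟩⟩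
end

section
/- Let Ω be a nonempty set and let S ⊆ FIN(Ω) be closed under binary union, with (S,∪) of infinite breadth. Then there exist a sequence (E_n)_{n≥1} in FIN(Ω) and a sequence (F_n)_{n≥1} of subsets of S such that: |E_n| = |F_n| = n for each n; the sets E₁, E₂, … are pairwise disjoint; every x ∈ F_n satisfies E_j ⊆ x for all 1 ≤ j ≤ n−1; and for each n and each γ ∈ E_n there is exactly one x ∈ F_n with γ ∈ x. -/
theorem IncompU.exists_private_s17 {Ω : Type*} [DecidableEq Ω] {G : Finset (Finset Ω)}
    (hG : IncompU G) (h2 : 2 ≤ G.card) {x : Finset Ω} (hx : x ∈ G) :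
    ∃ γ ∈ x, ∀ y ∈ G, γ ∈ y → y = x := by
  by_contra! hcon
  have hcard := Finset.card_erase_of_mem hx
  refine hG.2 (G.erase x) (Finset.erase_ssubset hx) (Finset.card_pos.1 (by omega)) ?_
  apply le_antisymm (Finset.sup_mono (Finset.erase_subset x G))
  intro γ hγ
  obtain ⟨w, hw, hγw⟩ := Finset.mem_sup.1 hγ
  by_cases hwx : w = x
  · subst hwx
    obtain ⟨y, hy, hγy, hyw⟩ := hcon γ hγw
    exact Finset.mem_sup.2 ⟨y, Finset.mem_erase.2 ⟨hyw, hy⟩, hγy⟩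
  · exact Finset.mem_sup.2 ⟨w, Finset.mem_erase.2 ⟨hwx, hw⟩, hγw⟩

theorem sup_union_mem {Ω : Type*} [DecidableEq Ω] {S : Set (Finset Ω)}
    (hS : ∀ x ∈ S, ∀ y ∈ S, x ∪ y ∈ S) {z : Finset Ω} (hz : z ∈ S)
    (T : Finset (Finset Ω)) (hT : ∀ x ∈ T, x ∈ S) : T.sup id ∪ z ∈ S := by
  induction T using Finset.induction_on with
  | empty => simpa using hz
  | insert a T _ ih =>
    rw [Finset.sup_insert, Finset.sup_eq_union, Finset.union_assoc]
    exact hS _ (hT a (Finset.mem_insert_self a T)) _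
      (ih fun x hx => hT x (Finset.mem_insert_of_mem hx))

/-- One step of the construction: above any `z ∈ S` there is a pair `(A, F)` of size `n` with
`A` disjoint from `z`. The element `z'` of `S` absorbs `A` and serves as the base of the next
step. -/
theorem exists_step {Ω : Type*} [DecidableEq Ω] [Nonempty Ω] {S : Set (Finset Ω)}
    (hS : ∀ x ∈ S, ∀ y ∈ S, x ∪ y ∈ S) (hbr : InfBreadthIn S) (n : ℕ) (z : S) :
    ∃ (A : Finset Ω) (F : Finset (Finset Ω)) (z' : S),
      A.card = n ∧ F.card = n ∧ ↑F ⊆ S ∧ Disjoint A z.1 ∧ (∀ x ∈ F, z.1 ⊆ x) ∧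
      (∀ γ ∈ A, ∃! x, x ∈ F ∧ γ ∈ x) ∧ z.1 ⊆ z'.1 ∧ A ⊆ z'.1 := by
  obtain ⟨z, hz⟩ := z
  -- Up to `|z|` members are lost to `z`; two members are needed for private points to exist.
  obtain ⟨G, hGS, hG, hcard⟩ := hbr (n + z.card + 2)
  have hpriv : ∀ x, ∃ γ, x ∈ G → γ ∈ x ∧ ∀ y ∈ G, γ ∈ y → y = x := by
    intro x
    by_cases hx : x ∈ G
    · obtain ⟨γ, h1, h2⟩ := hG.exists_private_s17 (by omega) hx
      exact ⟨γ, fun _ => ⟨h1, h2⟩⟩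
    · exact ⟨Classical.arbitrary Ω, fun h => absurd h hx⟩
  choose g hg using hpriv
  have hginj : ∀ x ∈ G, ∀ y ∈ G, g x = g y → x = y := fun x hx y hy h =>
    (hg y hy).2 x hx (h ▸ (hg x hx).1)
  have hbad : (G.filter fun x => g x ∈ z).card ≤ z.card := by
    apply Finset.card_le_card_of_injOn g
    · intro x hx
      exact (Finset.mem_filter.1 hx).2
    · intro x hx y hy h
      exact hginj x (Finset.mem_filter.1 hx).1 y (Finset.mem_filter.1 hy).1 h
  have hsum := Finset.card_filter_add_card_filter_not (s := G) (fun x => g x ∈ z)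
  obtain ⟨T, hTsub, hTcard⟩ := Finset.exists_subset_card_eq
    (show n ≤ (G.filter fun x => ¬ g x ∈ z).card by omega)
  have hTG : ∀ x ∈ T, x ∈ G := fun x hx => (Finset.mem_filter.1 (hTsub hx)).1
  have hTz : ∀ x ∈ T, g x ∉ z := fun x hx => (Finset.mem_filter.1 (hTsub hx)).2
  -- Adjoining `z` keeps `g x` private, since `g x ∉ z`.
  have huniq : ∀ x ∈ T, ∀ y ∈ T, g x ∈ y ∪ z → y = x := by
    intro x hx y hy h
    exact (hg x (hTG x hx)).2 y (hTG y hy) ((Finset.mem_union.1 h).resolve_right (hTz x hx))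
  refine ⟨T.image g, T.image (· ∪ z),
    ⟨T.sup id ∪ z, sup_union_mem hS hz T fun x hx => hGS (hTG x hx)⟩,
    ?_, ?_, ?_, ?_, ?_, ?_, Finset.subset_union_right, ?_⟩
  · rw [Finset.card_image_of_injOn, hTcard]
    intro x hx y hy h
    exact hginj x (hTG x hx) y (hTG y hy) h
  · rw [Finset.card_image_of_injOn, hTcard]
    intro x hx y hy h
    have hxy : x ∪ z = y ∪ z := h
    exact (huniq x hx y hy (hxy ▸ Finset.mem_union_left z (hg x (hTG x hx)).1)).symm
  · intro w hw
    obtain ⟨x, hx, rfl⟩ := Finset.mem_image.1 hw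
    exact hS x (hGS (hTG x hx)) z hz
  · rw [Finset.disjoint_left]
    intro γ hγ
    obtain ⟨x, hx, rfl⟩ := Finset.mem_image.1 hγ
    exact hTz x hx
  · intro w hw
    obtain ⟨x, hx, rfl⟩ := Finset.mem_image.1 hw
    exact Finset.subset_union_right
  · intro γ hγ
    obtain ⟨x, hx, rfl⟩ := Finset.mem_image.1 hγ
    refine ⟨x ∪ z, ⟨Finset.mem_image_of_mem _ hx,
      Finset.mem_union_left z (hg x (hTG x hx)).1⟩, ?_⟩
    rintro w ⟨hw, hγw⟩
    obtain ⟨y, hy, rfl⟩ := Finset.mem_image.1 hw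
    rw [huniq x hx y hy hγw]
  · intro γ hγ
    obtain ⟨x, hx, rfl⟩ := Finset.mem_image.1 hγ
    exact Finset.mem_union_left z (Finset.mem_sup.2 ⟨x, hx, (hg x (hTG x hx)).1⟩)

/-- If `S ⊆ FIN(Ω)` is union-closed of infinite breadth, there
    are sequences `(E_n)_{n≥1}` in `FIN(Ω)` and `(F_n)_{n≥1}` of (finite)
    subsets of `S` with: `|E_n| = |F_n| = n`; the `E_n` pairwise disjoint;
    every `x ∈ F_n` contains `E_j` for `1 ≤ j ≤ n-1`; and each `γ ∈ E_n` lies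
    in exactly one member of `F_n`. -/
theorem stmt17 {Ω : Type*} [DecidableEq Ω] [Nonempty Ω] (S : Set (Finset Ω))
    (hS : ∀ x ∈ S, ∀ y ∈ S, x ∪ y ∈ S) (hbr : InfBreadthIn S) :
    ∃ (E : ℕ → Finset Ω) (F : ℕ → Finset (Finset Ω)),
      (∀ n : ℕ, 1 ≤ n → (E n).card = n ∧ (F n).card = n ∧ ↑(F n) ⊆ S) ∧
      (∀ m n : ℕ, 1 ≤ m → 1 ≤ n → m ≠ n → Disjoint (E m) (E n)) ∧
      (∀ n : ℕ, 1 ≤ n → ∀ x ∈ F n, ∀ j : ℕ, 1 ≤ j → j < n → E j ⊆ x) ∧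
      (∀ n : ℕ, 1 ≤ n → ∀ γ ∈ E n, ∃! x, x ∈ F n ∧ γ ∈ x) := by
  obtain ⟨G, hGS, hG, -⟩ := hbr 0
  obtain ⟨z₀, hz₀⟩ := hG.1
  choose A F z' hA hF hFS hdisj hsub huniq hzz' hAz' using exists_step hS hbr
  -- The bases `Z n` increase, and `A m (Z m) ⊆ Z (m + 1)`.
  let Z : ℕ → S := fun n => Nat.rec ⟨z₀, hGS hz₀⟩ (fun k z => z' k z) n
  have hmono : Monotone fun n => (Z n).1 := monotone_nat_of_le_succ fun n => hzz' n (Z n)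
  have hlt : ∀ m n, m < n → A m (Z m) ⊆ (Z n).1 := fun m n hmn =>
    (hAz' m (Z m)).trans (hmono (Nat.succ_le_of_lt hmn))
  refine ⟨fun n => A n (Z n), fun n => F n (Z n),
    fun n _ => ⟨hA n _, hF n _, hFS n _⟩, ?_,
    fun n _ x hx j _ hjn => (hlt j n hjn).trans (hsub n _ x hx), fun n _ => huniq n _⟩
  intro m n _ _ hmn
  rcases lt_or_gt_of_ne hmn with h | h
  · exact ((hdisj n (Z n)).mono_right (hlt m n h)).symm
  · exact (hdisj m (Z m)).mono_right (hlt n m h)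
end

section
/- Let Ω be a set and let (E_n)_{n≥1} be a sequence of pairwise disjoint finite subsets of Ω with |E_n| = n. Define D₀ = ∅, D_n = E₁ ∪ … ∪ E_n, D_∞ = ⋃_{n≥1} E_n, and for x ∈ FIN(Ω) set N(x) = max{ n ≥ 0 : D_n ⊆ x }, r(x) = (x ∩ D_∞) ∖ D_{N(x)}, and η(x) = |r(x)|. Then η is subadditive on (FIN(Ω),∪): η(x ∪ y) ≤ η(x) + η(y) for all x, y ∈ FIN(Ω). -/
/-!
Since `|E n| = n`, only finitely many `n` satisfy `D n ⊆ x`, so `N x` is a genuine maximum and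
hence `N` is monotone for inclusion. The sets `D n` increase with `n`, so `D (N x)` and `D (N y)`
are both contained in `D (N (x ∪ y))`. Removing the larger set leaves less, which gives
`r (x ∪ y) ⊆ r x ∪ r y`; taking cardinalities yields subadditivity.
-/

/-- `D n = E 1 ∪ ⋯ ∪ E n` (so `D 0 = ∅`). -/
def Dset {Ω : Type*} [DecidableEq Ω] (E : ℕ → Finset Ω) (n : ℕ) : Finset Ω :=
  (Finset.range n).sup fun i => E (i + 1)

/-- `N x = max { n : D n ⊆ x }`. -/
noncomputable def Nfun {Ω : Type*} [DecidableEq Ω] (E : ℕ → Finset Ω)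
    (x : Finset Ω) : ℕ :=
  sSup {n : ℕ | Dset E n ⊆ x}

/-- `r x = (x ∩ D_∞) \ D_{N(x)}`, where `D_∞ = ⋃_{n ≥ 1} E n`. -/
noncomputable def rset {Ω : Type*} [DecidableEq Ω] (E : ℕ → Finset Ω)
    (x : Finset Ω) : Finset Ω :=
  letI := Classical.decPred fun γ : Ω => ∃ n : ℕ, γ ∈ E (n + 1)
  (x.filter fun γ => ∃ n : ℕ, γ ∈ E (n + 1)) \ Dset E (Nfun E x)

/-- `η x = |r x|`. -/
noncomputable def eta {Ω : Type*} [DecidableEq Ω] (E : ℕ → Finset Ω)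
    (x : Finset Ω) : ℕ :=
  (rset E x).card

theorem Dset_mono {Ω : Type*} [DecidableEq Ω] (E : ℕ → Finset Ω) : Monotone (Dset E) :=
  fun _ _ h => Finset.sup_mono (Finset.range_mono h)

/-- If `D n ⊆ x` then `n = |E n| ≤ |x|`; this bound keeps the `sSup` in `Nfun` from being junk. -/
theorem bddAbove_Dset_subset {Ω : Type*} [DecidableEq Ω] (E : ℕ → Finset Ω)
    (hcard : ∀ n : ℕ, 1 ≤ n → (E n).card = n) (x : Finset Ω) :
    BddAbove {n : ℕ | Dset E n ⊆ x} := by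
  refine ⟨x.card, fun n hn => ?_⟩
  rcases n with _ | n
  · exact Nat.zero_le _
  · have h : E (n + 1) ⊆ Dset E (n + 1) :=
      Finset.le_sup (f := fun i => E (i + 1)) (Finset.self_mem_range_succ n)
    simpa [hcard] using Finset.card_le_card (h.trans hn)

theorem Nfun_mono {Ω : Type*} [DecidableEq Ω] (E : ℕ → Finset Ω)
    (hcard : ∀ n : ℕ, 1 ≤ n → (E n).card = n) : Monotone (Nfun E) :=
  fun _ y h => csSup_le_csSup (bddAbove_Dset_subset E hcard y) ⟨0, by simp [Dset]⟩
    fun _ hn => Finset.Subset.trans hn h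

theorem rset_union_subset {Ω : Type*} [DecidableEq Ω] (E : ℕ → Finset Ω)
    (hcard : ∀ n : ℕ, 1 ≤ n → (E n).card = n) (x y : Finset Ω) :
    rset E (x ∪ y) ⊆ rset E x ∪ rset E y := by
  have hx := Dset_mono E (Nfun_mono E hcard (Finset.subset_union_left : x ⊆ x ∪ y))
  have hy := Dset_mono E (Nfun_mono E hcard (Finset.subset_union_right : y ⊆ x ∪ y))
  intro γ hγ
  simp only [rset, Finset.mem_union, Finset.mem_sdiff, Finset.mem_filter] at hγ ⊢
  obtain ⟨⟨h | h, hE⟩, hD⟩ := hγ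
  · exact Or.inl ⟨⟨h, hE⟩, fun h' => hD (hx h')⟩
  · exact Or.inr ⟨⟨h, hE⟩, fun h' => hD (hy h')⟩

/-- For pairwise disjoint `E n` (`n ≥ 1`) with `|E n| = n`, the
    function `η` is subadditive on `(FIN(Ω), ∪)`. -/
theorem stmt18 {Ω : Type*} [DecidableEq Ω] (E : ℕ → Finset Ω)
    (hcard : ∀ n : ℕ, 1 ≤ n → (E n).card = n)
    (hdisj : ∀ m n : ℕ, 1 ≤ m → 1 ≤ n → m ≠ n → Disjoint (E m) (E n)) :
    ∀ x y : Finset Ω, eta E (x ∪ y) ≤ eta E x + eta E y := by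
  intro x y
  exact (Finset.card_le_card (rset_union_subset E hcard x y)).trans (Finset.card_union_le _ _)
end
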